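/- Let 𝔤 be a finite-dimensional Lie algebra over a field of characteristic zero which is k-step nilpotent, i.e., its lower central series satisfies 𝔤_(k−1) ≠ 0 and 𝔤_(k) = 0, and let 𝔤₀ ⊆ 𝔤 be a Lie subalgebra such that the pair (𝔤,𝔤₀) is effective. Then the order satisfies o(𝔤,𝔤₀) ≤ k + 1. -/

import Mathlib

/-- One step of the Weisfeiler filtration: `{x ∈ S | ∀ y, ⁅x, y⁆ ∈ S}`. -/
def weisfeilerStep {K L : Type*} [Field K] [LieRing L] [LieAlgebra K L]
    (S : Submodule K L) : Submodule K L where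
  carrier := {x | x ∈ S ∧ ∀ y : L, ⁅x, y⁆ ∈ S}
  add_mem' := fun ha hb => ⟨S.add_mem ha.1 hb.1, fun y => by
    rw [add_lie]; exact S.add_mem (ha.2 y) (hb.2 y)⟩
  zero_mem' := ⟨S.zero_mem, fun y => by rw [zero_lie]; exact S.zero_mem⟩
  smul_mem' := fun c x hx => ⟨S.smul_mem c hx.1, fun y => by
    rw [smul_lie]; exact S.smul_mem c (hx.2 y)⟩

/-- The Weisfeiler filtration of the pair `(L, g₀)`:
`W 0 = g₀` and `W (k+1) = {x ∈ W k | ∀ y : L, ⁅x, y⁆ ∈ W k}`. -/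
def weisfeiler {K L : Type*} [Field K] [LieRing L] [LieAlgebra K L]
    (g₀ : LieSubalgebra K L) : ℕ → Submodule K L
  | 0 => g₀.toSubmodule
  | (k + 1) => weisfeilerStep (weisfeiler g₀ k)

/-- The pair `(L, g₀)` is effective: the only ideal of `L` contained in `g₀` is zero. -/
def IsEffectivePair {K L : Type*} [Field K] [LieRing L] [LieAlgebra K L]
    (g₀ : LieSubalgebra K L) : Prop :=
  ∀ I : LieIdeal K L, (I : Submodule K L) ≤ g₀.toSubmodule → I = ⊥

/-!
If the lower central term of index `n + 1` vanishes, then bracketing any element `n + 1` times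
gives zero, so an element whose iterated brackets of length at most `n` lie in `g₀`
has all its iterated brackets in `g₀`. Hence the Weisfeiler filtration is constant from index `n`
on; a term equal to its successor is an ideal contained in `g₀`, and so vanishes by effectiveness.
-/

theorem lie_mem_lowerCentralSeries_succ
    {R L : Type*} [CommRing R] [LieRing L] [LieAlgebra R L] {m : ℕ} {x : L}
    (hx : x ∈ LieModule.lowerCentralSeries R L L m) (y : L) :
    ⁅x, y⁆ ∈ LieModule.lowerCentralSeries R L L (m + 1) := by
  rw [← lie_skew, LieModule.lowerCentralSeries_succ]
  exact neg_mem (LieSubmodule.lie_mem_lie (LieSubmodule.mem_top y) hx)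

section Weisfeiler

variable {K L : Type*} [Field K] [LieRing L] [LieAlgebra K L]

theorem exists_lieIdeal_eq_of_le_weisfeilerStep {S : Submodule K L} (hS : S ≤ weisfeilerStep S) :
    ∃ I : LieIdeal K L, I.toSubmodule = S := by
  refine (S.exists_lieSubmodule_coe_eq_iff L).mpr fun y x hx => ?_
  rw [← lie_skew]
  exact S.neg_mem ((hS hx).2 y)

variable {g₀ : LieSubalgebra K L}

theorem mem_weisfeiler_succ {n : ℕ} {x : L} :
    x ∈ weisfeiler g₀ (n + 1) ↔ x ∈ weisfeiler g₀ n ∧ ∀ y : L, ⁅x, y⁆ ∈ weisfeiler g₀ n :=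
  Iff.rfl

theorem weisfeiler_antitone (g₀ : LieSubalgebra K L) : Antitone (weisfeiler g₀) :=
  antitone_nat_of_succ_le fun _ _ hx => (mem_weisfeiler_succ.mp hx).1

theorem weisfeiler_inf_lowerCentralSeries_le_succ {n m : ℕ}
    (h : (LieModule.lowerCentralSeries K L L (m + n + 1)).toSubmodule ≤ g₀.toSubmodule) :
    weisfeiler g₀ n ⊓ (LieModule.lowerCentralSeries K L L m).toSubmodule ≤
      weisfeiler g₀ (n + 1) := by
  induction n generalizing m with
  | zero =>
    rintro x ⟨hx, hxm⟩
    exact mem_weisfeiler_succ.mpr ⟨hx, fun y => h (lie_mem_lowerCentralSeries_succ hxm y)⟩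
  | succ n ih =>
    rintro x ⟨hx, hxm⟩
    rw [← Nat.add_assoc, Nat.add_right_comm m n 1] at h
    exact mem_weisfeiler_succ.mpr
      ⟨hx, fun y => ih h ⟨hx.2 y, lie_mem_lowerCentralSeries_succ hxm y⟩⟩

theorem weisfeiler_le_succ_of_lowerCentralSeries_le {n : ℕ}
    (h : (LieModule.lowerCentralSeries K L L (n + 1)).toSubmodule ≤ g₀.toSubmodule) :
    weisfeiler g₀ n ≤ weisfeiler g₀ (n + 1) := by
  simpa using weisfeiler_inf_lowerCentralSeries_le_succ (m := 0) (by rwa [Nat.zero_add])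

theorem IsEffectivePair.weisfeiler_eq_bot_of_le_succ (heff : IsEffectivePair g₀) {n : ℕ}
    (h : weisfeiler g₀ n ≤ weisfeiler g₀ (n + 1)) : weisfeiler g₀ n = ⊥ := by
  obtain ⟨I, hI⟩ := exists_lieIdeal_eq_of_le_weisfeilerStep h
  have hI_le : I.toSubmodule ≤ g₀.toSubmodule := hI ▸ weisfeiler_antitone g₀ n.zero_le
  rw [← hI, heff I hI_le, LieSubmodule.bot_toSubmodule]

theorem order_le_of_nilpotent_general (heff : IsEffectivePair g₀) {k r : ℕ}
    (hk : LieModule.lowerCentralSeries K L L (k + 1) = ⊥)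
    (hr : IsLeast {s | weisfeiler g₀ s = ⊥} r) : r ≤ k :=
  hr.2 <| heff.weisfeiler_eq_bot_of_le_succ <|
    weisfeiler_le_succ_of_lowerCentralSeries_le (by rw [hk]; exact bot_le)

end Weisfeiler

/-- If `𝔤` is `k`-step nilpotent and `(𝔤, 𝔤₀)` is effective, then the order of
the pair satisfies `o(𝔤, 𝔤₀) ≤ k + 1`. -/
theorem order_le_of_nilpotent
    {K : Type*} [Field K] [CharZero K]
    {L : Type*} [LieRing L] [LieAlgebra K L] [Module.Finite K L]
    (g₀ : LieSubalgebra K L) (heff : IsEffectivePair g₀)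
    (k : ℕ) (hk : LieModule.lowerCentralSeries K L L (k - 1) ≠ ⊥)
    (hk' : LieModule.lowerCentralSeries K L L k = ⊥)
    (r : ℕ) (hbot : weisfeiler g₀ r = ⊥) (hmin : ∀ s < r, weisfeiler g₀ s ≠ ⊥) :
    r ≤ k + 1 := by
  exact (order_le_of_nilpotent_general heff
    (eq_bot_mono (LieModule.antitone_lowerCentralSeries K L L k.le_succ) hk')
    ⟨hbot, fun s hs => not_lt.mp fun hsr => hmin s hsr hs⟩).trans k.le_succ
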